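/- arXiv:1007.4870 — 2 statements merged into one kernel-verified Lean document; each statement's English description precedes it below -/
import Mathlib

section
/- Let X be a real random variable taking strictly positive values, and let m, n be non-negative integers with m + n > 2. Let D_m and D_n be independent random variables distributed respectively like m⊙X and n⊙X (the distance from the origin after m, respectively n, independent steps whose lengths are independent copies of X and whose directions are independent and uniform on the unit circle, all lengths and directions independent). Then Pr(D_m > D_n) = m/(m+n). -/
open MeasureTheory ProbabilityTheory
open scoped ENNReal

/-- The unit vector in the plane with direction angle `θ`. -/
noncomputable def stepVec (θ : ℝ) : EuclideanSpace ℝ (Fin 2) :=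
  (WithLp.equiv 2 (Fin 2 → ℝ)).symm ![Real.cos θ, Real.sin θ]

/-- The uniform probability distribution on the unit circle of the plane. -/
noncomputable def uniformCircle : Measure (EuclideanSpace ℝ (Fin 2)) :=
  Measure.map stepVec
    ((ENNReal.ofReal (2 * Real.pi))⁻¹ • volume.restrict (Set.Ioc 0 (2 * Real.pi)))

/-- The distribution of `n ⊙ X`: the distance from the origin after `n` independent
steps whose lengths are i.i.d. with law `μ` and whose directions are i.i.d. uniform
on the unit circle, all independent. -/
noncomputable def walkDist (μ : Measure ℝ) (n : ℕ) : Measure ℝ :=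
  Measure.map
    (fun p : (Fin n → ℝ) × (Fin n → EuclideanSpace ℝ (Fin 2)) => ‖∑ i, p.1 i • p.2 i‖)
    ((Measure.pi fun _ => μ).prod (Measure.pi fun _ => uniformCircle))

/-!
Call a set of steps *long* if its sum is longer than the sum of the remaining steps. Split the steps
into three nonempty groups with sums `x`, `y`, `z`, and rotate the group of `y` against that of `x`
by a uniform angle: this does not change the joint law, and, given `‖x‖`, `‖y‖`, `‖z‖`, the law of
cosines shows that `‖x + y‖ < ‖z‖` has conditional probability `1 / π` times the angle between the
sides `‖x‖` and `‖y‖` of the triangle with these side lengths. The angles of a triangle add up to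
`π`, so the probabilities that each of the three groups is long add up to `1`. With more than two
steps ties have probability zero, so exactly one of a group and its complement is long, and the
probability of being long is additive over disjoint groups. As the steps are exchangeable, it is
proportional to the size of the group.
-/

section

open scoped Real

section Triangle

open InnerProductGeometry

/-- The angle opposite the side of length `c` in a triangle with side lengths `a`, `b`, `c`, given
by the law of cosines. When the triangle inequality fails, the quotient lies outside `[-1, 1]`, so
that the value is `0` or `π`, as for a flat triangle. -/
noncomputable def triangleAngle (a b c : ℝ) : ℝ :=
  Real.arccos ((a ^ 2 + b ^ 2 - c ^ 2) / (2 * a * b))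

lemma triangleAngle_nonneg (a b c : ℝ) : 0 ≤ triangleAngle a b c :=
  Real.arccos_nonneg _

lemma triangleAngle_comm (a b c : ℝ) : triangleAngle a b c = triangleAngle b a c := by
  rw [triangleAngle, triangleAngle, add_comm (a ^ 2), mul_right_comm]

lemma triangleAngle_eq_pi {a b c : ℝ} (ha : 0 < a) (hb : 0 < b) (h : a + b ≤ c) :
    triangleAngle a b c = π := by
  rw [triangleAngle, Real.arccos_eq_pi, div_le_iff₀ (by positivity)]
  nlinarith

lemma triangleAngle_eq_zero {a b c : ℝ} (ha : 0 < a) (hb : 0 < b) (hc : 0 < c) (h : b + c ≤ a) :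
    triangleAngle a b c = 0 := by
  rw [triangleAngle, Real.arccos_eq_zero, le_div_iff₀ (by positivity)]
  nlinarith

lemma angle_eq_triangleAngle {V : Type*} [NormedAddCommGroup V] [InnerProductSpace ℝ V]
    (x y : V) : angle x y = triangleAngle ‖x‖ ‖y‖ ‖x - y‖ := by
  rw [angle, triangleAngle,
    real_inner_eq_norm_mul_self_add_norm_mul_self_sub_norm_sub_mul_self_div_two,
    div_div, ← mul_assoc]
  simp only [sq]

lemma exists_complex_norm_sub_eq {a b c : ℝ} (ha : 0 ≤ a) (hb : 0 ≤ b) (h₁ : |a - b| ≤ c)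
    (h₂ : c ≤ a + b) : ∃ x y : ℂ, ‖x‖ = a ∧ ‖y‖ = b ∧ ‖x - y‖ = c := by
  let f : ℝ → ℝ := fun θ ↦ ‖(a : ℂ) - b * Complex.exp (θ * Complex.I)‖
  have hf : Continuous f := by fun_prop
  have hf₀ : f 0 = |a - b| := by
    simp [f, ← Complex.ofReal_sub, Complex.norm_real, Real.norm_eq_abs]
  have hfπ : f π = a + b := by
    simp [f, Complex.exp_pi_mul_I, ← Complex.ofReal_add, Complex.norm_real, Real.norm_eq_abs,
      abs_of_nonneg (add_nonneg ha hb)]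
  obtain ⟨θ, -, hθ⟩ := intermediate_value_Icc Real.pi_pos.le hf.continuousOn
    (show c ∈ Set.Icc (f 0) (f π) by rw [hf₀, hfπ]; exact ⟨h₁, h₂⟩)
  exact ⟨a, b * Complex.exp (θ * Complex.I), by simp [abs_of_nonneg ha],
    by simp [Complex.norm_exp_ofReal_mul_I, abs_of_nonneg hb], hθ⟩

lemma triangleAngle_add_add_eq_pi {a b c : ℝ} (ha : 0 < a) (hb : 0 < b) (hc : 0 < c) :
    triangleAngle a b c + triangleAngle b c a + triangleAngle c a b = π := by
  rcases le_total (a + b) c with hab | hab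
  · rw [triangleAngle_eq_pi ha hb hab, triangleAngle_comm b c,
      triangleAngle_eq_zero hc hb ha (by linarith), triangleAngle_eq_zero hc ha hb hab]
    ring
  rcases le_total (b + c) a with hbc | hbc
  · rw [triangleAngle_eq_pi hb hc hbc, triangleAngle_comm c a,
      triangleAngle_eq_zero ha hb hc hbc, triangleAngle_eq_zero ha hc hb (by linarith)]
    ring
  rcases le_total (c + a) b with hca | hca
  · rw [triangleAngle_eq_pi hc ha hca, triangleAngle_comm a b,
      triangleAngle_eq_zero hb ha hc (by linarith), triangleAngle_eq_zero hb hc ha hca]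
    ring
  obtain ⟨x, y, rfl, rfl, rfl⟩ := exists_complex_norm_sub_eq ha.le hb.le
    (abs_le.2 ⟨by linarith, by linarith⟩) hab
  have hsum := angle_add_angle_sub_add_angle_sub_eq_pi x (norm_pos_iff.1 hb)
  rw [angle_eq_triangleAngle, angle_eq_triangleAngle, angle_eq_triangleAngle, sub_sub_cancel,
    sub_sub_cancel, norm_sub_rev y x, triangleAngle_comm ‖x‖ ‖x - y‖] at hsum
  linarith

end Triangle

section UniformAngle

/-- The uniform distribution on angles, with the circle encoded as the fundamental domain
`(0, 2π]`; by definition `uniformCircle` is its image under `stepVec`. -/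
noncomputable def uniformAngle : Measure ℝ :=
  (ENNReal.ofReal (2 * π))⁻¹ • volume.restrict (Set.Ioc 0 (2 * π))

lemma uniformAngle_apply {s : Set ℝ} (hs : MeasurableSet s) :
    uniformAngle s = (ENNReal.ofReal (2 * π))⁻¹ * volume (s ∩ Set.Ioc 0 (2 * π)) := by
  rw [uniformAngle, Measure.smul_apply, Measure.restrict_apply hs, smul_eq_mul]

instance : IsProbabilityMeasure uniformAngle where
  measure_univ := by
    rw [uniformAngle_apply .univ, Set.univ_inter, Real.volume_Ioc, sub_zero]
    exact ENNReal.inv_mul_cancel (by simp [Real.pi_pos]) ENNReal.ofReal_ne_top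

lemma map_uniformAngle_add {α : Type*} [MeasurableSpace α] {f : ℝ → α} (hf : Measurable f)
    (hper : Function.Periodic f (2 * π)) (φ : ℝ) :
    uniformAngle.map (fun θ ↦ f (φ + θ)) = uniformAngle.map f := by
  ext s hs
  have hA : MeasurableSet (f ⁻¹' s) := hf hs
  have hinv (g : AddSubgroup.zmultiples (2 * π)) : (g +ᵥ ·) ⁻¹' (f ⁻¹' s) = f ⁻¹' s := by
    obtain ⟨_, k, rfl⟩ := g
    ext θ
    simp [AddSubgroup.vadd_def, add_comm _ θ, (hper.int_mul k) θ]
  have hshift : (φ + ·) ⁻¹' (f ⁻¹' s) ∩ Set.Ioc 0 (2 * π)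
      = (φ + ·) ⁻¹' (f ⁻¹' s ∩ Set.Ioc φ (φ + 2 * π)) := by
    ext θ; simp
  have hpre : (fun θ ↦ f (φ + θ)) ⁻¹' s = (φ + ·) ⁻¹' (f ⁻¹' s) := rfl
  have hdom : volume (f ⁻¹' s ∩ Set.Ioc φ (φ + 2 * π))
      = volume (f ⁻¹' s ∩ Set.Ioc 0 (0 + 2 * π)) :=
    (isAddFundamentalDomain_Ioc Real.two_pi_pos φ volume).measure_set_eq
      (isAddFundamentalDomain_Ioc Real.two_pi_pos 0 volume) hA hinv
  rw [Measure.map_apply (by fun_prop) hs, Measure.map_apply hf hs, hpre,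
    uniformAngle_apply (hA.preimage (measurable_const_add φ)), uniformAngle_apply hA, hshift,
    measure_preimage_add, hdom, zero_add]

lemma cos_lt_iff_arccos_lt {θ t : ℝ} (hθ₀ : 0 < θ) (hθπ : θ ≤ π) :
    Real.cos θ < t ↔ Real.arccos t < θ := by
  have harccos : Real.arccos (Real.cos θ) = θ := Real.arccos_cos hθ₀.le hθπ
  refine ⟨fun h ↦ ?_, fun h ↦ ?_⟩
  · rcases le_or_gt t 1 with ht | ht
    · simpa only [harccos] using Real.arccos_lt_arccos (Real.neg_one_le_cos θ) h ht
    · rwa [Real.arccos_of_one_le ht.le]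
  · contrapose! h
    simpa only [harccos] using Real.arccos_le_arccos h

lemma cos_lt_iff_mem_Ioo {θ t : ℝ} (hθ : θ ∈ Set.Ioo 0 (2 * π)) :
    Real.cos θ < t ↔ θ ∈ Set.Ioo (Real.arccos t) (2 * π - Real.arccos t) := by
  obtain ⟨hθ₀, hθ₂⟩ := hθ
  rcases le_or_gt θ π with hθπ | hθπ
  · rw [cos_lt_iff_arccos_lt hθ₀ hθπ]
    exact ⟨fun h ↦ ⟨h, by linarith⟩, And.left⟩
  · rw [← Real.cos_two_pi_sub, cos_lt_iff_arccos_lt (by linarith) (by linarith)]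
    exact ⟨fun h ↦ ⟨by linarith, by linarith⟩, fun h ↦ by linarith [h.2]⟩

lemma uniformAngle_cos_lt (t : ℝ) :
    uniformAngle {θ | Real.cos θ < t} = ENNReal.ofReal (Real.arccos (-t) / π) := by
  have harc : {θ | Real.cos θ < t} ∩ Set.Ioo 0 (2 * π)
      = Set.Ioo (Real.arccos t) (2 * π - Real.arccos t) := by
    ext θ
    refine ⟨fun h ↦ (cos_lt_iff_mem_Ioo h.2).1 h.1, fun h ↦ ?_⟩
    have hθ : θ ∈ Set.Ioo 0 (2 * π) :=
      Set.Ioo_subset_Ioo (Real.arccos_nonneg t) (by linarith [Real.arccos_nonneg t]) h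
    exact ⟨(cos_lt_iff_mem_Ioo hθ).2 h, hθ⟩
  rw [uniformAngle_apply (measurableSet_lt Real.measurable_cos measurable_const),
    measure_congr ((ae_eq_refl _).inter Ioo_ae_eq_Ioc.symm), harc, Real.volume_Ioo,
    ← ENNReal.ofReal_inv_of_pos Real.two_pi_pos, ← ENNReal.ofReal_mul (by positivity),
    Real.arccos_neg]
  congr 1
  field_simp
  ring

lemma uniformAngle_cos_eq (t : ℝ) : uniformAngle {θ | Real.cos θ = t} = 0 := by
  have hsub : {θ | Real.cos θ = t} ∩ Set.Ioc 0 (2 * π)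
      ⊆ {Real.arccos t, 2 * π - Real.arccos t} := by
    rintro θ ⟨rfl, hθ₀, hθ₂⟩
    rcases le_or_gt θ π with hθπ | hθπ
    · left
      rw [Real.arccos_cos hθ₀.le hθπ]
    · right
      rw [← Real.cos_two_pi_sub, Real.arccos_cos (by linarith) (by linarith)]
      simp
  rw [uniformAngle_apply (measurableSet_eq_fun Real.measurable_cos measurable_const),
    measure_mono_null hsub (Set.Finite.measure_zero (by simp) _), mul_zero]

lemma uniformAngle_cos_add (φ : ℝ) {s : Set ℝ} (hs : MeasurableSet s) :
    uniformAngle {θ | Real.cos (φ + θ) ∈ s} = uniformAngle {θ | Real.cos θ ∈ s} := by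
  have hmap := congrArg (· s) (map_uniformAngle_add Real.measurable_cos Real.cos_periodic φ)
  rwa [Measure.map_apply (by fun_prop) hs, Measure.map_apply Real.measurable_cos hs] at hmap

end UniformAngle

section LongProb

variable {V : Type*} [NormedAddCommGroup V] [MeasurableSpace V] {ι : Type*} [Fintype ι]
  [DecidableEq ι]

/-- The probability that the steps with index in `I` add up to a longer vector than the remaining
ones, when the steps are independent and the `i`-th one has law `ν i`. -/
noncomputable def longProb (ν : ι → Measure V) (I : Finset ι) : ℝ≥0∞ :=
  Measure.pi ν {f | ‖∑ i ∈ Iᶜ, f i‖ < ‖∑ i ∈ I, f i‖}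

lemma longProb_empty (ν : ι → Measure V) : longProb ν ∅ = 0 := by
  simp [longProb, not_lt_of_ge (norm_nonneg _)]

lemma longProb_map_equiv {κ : Type*} [Fintype κ] [DecidableEq κ] (μ : Measure V)
    [SigmaFinite μ] (e : ι ≃ κ) (I : Finset ι) :
    longProb (fun _ ↦ μ) (I.map e.toEmbedding) = longProb (fun _ ↦ μ) I := by
  have he := measurePreserving_piCongrLeft (fun _ : κ ↦ μ) e
  have hcompl : (I.map e.toEmbedding)ᶜ = Iᶜ.map e.toEmbedding := by
    ext j
    simp only [Finset.mem_compl, Finset.mem_map_equiv]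
  rw [longProb, ← he.measure_preimage_equiv, longProb, hcompl]
  simp only [Finset.sum_map, Equiv.coe_toEmbedding, Set.preimage_ofPred_eq,
    MeasurableEquiv.coe_piCongrLeft, Equiv.piCongrLeft_apply_apply]

end LongProb

section Averaging

variable {α G : Type*} [MeasurableSpace α] [MeasurableSpace G] {ρ : Measure α} [SFinite ρ]
  {κ : Measure G} [IsProbabilityMeasure κ] {T : G → α → α}

lemma measure_eq_lintegral_of_measurePreserving (hT : Measurable T.uncurry)
    (hρ : ∀ g, MeasurePreserving (T g) ρ ρ) {s : Set α} (hs : MeasurableSet s) :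
    ρ s = ∫⁻ x, κ {g | T g x ∈ s} ∂ρ :=
  calc ρ s = ∫⁻ g, ρ (T g ⁻¹' s) ∂κ := by
        simp only [(hρ _).measure_preimage hs.nullMeasurableSet, lintegral_const, measure_univ,
          mul_one]
    _ = κ.prod ρ (T.uncurry ⁻¹' s) := (Measure.prod_apply (hT hs)).symm
    _ = ∫⁻ x, κ {g | T g x ∈ s} ∂ρ := Measure.prod_apply_symm (hT hs)

lemma ae_of_ae_ae_measurePreserving (hT : Measurable T.uncurry)
    (hρ : ∀ g, MeasurePreserving (T g) ρ ρ) {p : α → Prop} (hp : MeasurableSet {x | p x})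
    (h : ∀ᵐ x ∂ρ, ∀ᵐ g ∂κ, p (T g x)) : ∀ᵐ x ∂ρ, p x := by
  have hnull : ρ {x | p x}ᶜ = 0 := by
    rw [measure_eq_lintegral_of_measurePreserving (κ := κ) hT hρ hp.compl]
    exact lintegral_eq_zero_of_ae_eq_zero h
  exact hnull

end Averaging

section Rotation

attribute [local instance] FiniteDimensional.of_fact_finrank_eq_two

variable {V : Type*} [NormedAddCommGroup V] [InnerProductSpace ℝ V]
  [Fact (Module.finrank ℝ V = 2)] (o : Orientation ℝ V (Fin 2))

lemma sq_norm_add_rotation {x y : V} (hx : x ≠ 0) (hy : y ≠ 0) (θ : ℝ) :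
    ‖x + o.rotation θ y‖ ^ 2 =
      ‖x‖ ^ 2 + ‖y‖ ^ 2 + 2 * ‖x‖ * ‖y‖ * Real.cos ((o.oangle x y).toReal + θ) := by
  rw [norm_add_sq_real, o.inner_eq_norm_mul_norm_mul_cos_oangle, o.oangle_rotation_right hx hy,
    LinearIsometryEquiv.norm_map, ← Real.Angle.cos_coe, Real.Angle.coe_add, Real.Angle.coe_toReal]
  ring

lemma uniformAngle_norm_add_rotation_lt {x y : V} (hx : x ≠ 0) (hy : y ≠ 0) {c : ℝ} (hc : 0 < c) :
    uniformAngle {θ : ℝ | ‖x + o.rotation θ y‖ < c}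
      = ENNReal.ofReal (triangleAngle ‖x‖ ‖y‖ c / π) := by
  have hxy : 0 < 2 * ‖x‖ * ‖y‖ := by positivity
  have hset : {θ : ℝ | ‖x + o.rotation θ y‖ < c} =
      {θ | Real.cos ((o.oangle x y).toReal + θ)
        ∈ Set.Iio (-((‖x‖ ^ 2 + ‖y‖ ^ 2 - c ^ 2) / (2 * ‖x‖ * ‖y‖)))} := by
    ext θ
    simp only [Set.mem_ofPred_eq, Set.mem_Iio]
    rw [← sq_lt_sq₀ (norm_nonneg _) hc.le, sq_norm_add_rotation o hx hy, ← neg_div,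
      lt_div_iff₀' hxy, neg_sub, lt_sub_iff_add_lt']
  rw [hset, uniformAngle_cos_add _ measurableSet_Iio]
  simp only [Set.mem_Iio]
  rw [uniformAngle_cos_lt, neg_neg, triangleAngle]

lemma ae_norm_add_rotation_ne {x y : V} (hx : x ≠ 0) (hy : y ≠ 0) (c : ℝ) :
    ∀ᵐ θ ∂uniformAngle, ‖x + o.rotation (θ : ℝ) y‖ ≠ c := by
  have hxy : 0 < 2 * ‖x‖ * ‖y‖ := by positivity
  have hsub : {θ : ℝ | ‖x + o.rotation θ y‖ = c} ⊆
      {θ | Real.cos ((o.oangle x y).toReal + θ)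
        ∈ ({(c ^ 2 - (‖x‖ ^ 2 + ‖y‖ ^ 2)) / (2 * ‖x‖ * ‖y‖)} : Set ℝ)} := by
    rintro θ rfl
    simp only [Set.mem_ofPred_eq, Set.mem_singleton_iff]
    rw [sq_norm_add_rotation o hx hy, add_sub_cancel_left, mul_div_cancel_left₀ _ hxy.ne']
  simp only [ne_eq, ae_iff, not_not]
  refine measure_mono_null hsub ?_
  rw [uniformAngle_cos_add _ (measurableSet_singleton _)]
  exact uniformAngle_cos_eq _

lemma ae_add_rotation_ne_zero (x : V) {y : V} (hy : y ≠ 0) :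
    ∀ᵐ θ ∂uniformAngle, x + o.rotation (θ : ℝ) y ≠ 0 := by
  rcases eq_or_ne x 0 with rfl | hx
  · simp [hy]
  · filter_upwards [ae_norm_add_rotation_ne o hx hy 0] with θ hθ using norm_ne_zero_iff.1 hθ

lemma uniformAngle_norm_add_rotation_lt_add_add {x y z : V} (hx : x ≠ 0) (hy : y ≠ 0)
    (hz : z ≠ 0) :
    uniformAngle {θ : ℝ | ‖x + o.rotation θ y‖ < ‖z‖}
      + uniformAngle {θ : ℝ | ‖y + o.rotation θ z‖ < ‖x‖}
      + uniformAngle {θ : ℝ | ‖z + o.rotation θ x‖ < ‖y‖} = 1 := by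
  have hx' : 0 < ‖x‖ := norm_pos_iff.2 hx
  have hy' : 0 < ‖y‖ := norm_pos_iff.2 hy
  have hz' : 0 < ‖z‖ := norm_pos_iff.2 hz
  have hnonneg (a b c : ℝ) : 0 ≤ triangleAngle a b c / π :=
    div_nonneg (triangleAngle_nonneg a b c) Real.pi_pos.le
  rw [uniformAngle_norm_add_rotation_lt o hx hy hz', uniformAngle_norm_add_rotation_lt o hy hz hx',
    uniformAngle_norm_add_rotation_lt o hz hx hy', ← ENNReal.ofReal_add (hnonneg _ _ _)
    (hnonneg _ _ _), ← ENNReal.ofReal_add (add_nonneg (hnonneg _ _ _) (hnonneg _ _ _))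
    (hnonneg _ _ _), ← add_div, ← add_div, triangleAngle_add_add_eq_pi hx' hy' hz',
    div_self Real.pi_ne_zero, ENNReal.ofReal_one]

section Walk

lemma measurable_uniformAngle_norm_add_rotation_lt [MeasurableSpace V] [BorelSpace V] {α : Type*}
    [MeasurableSpace α] {x y z : α → V} (hx : Measurable x) (hy : Measurable y)
    (hz : Measurable z) :
    Measurable fun a ↦
      uniformAngle {θ : ℝ | ‖x a + o.rotation (θ : Real.Angle) (y a)‖ < ‖z a‖} := by
  refine measurable_measure_prodMk_left
    (s := {p : α × ℝ | ‖x p.1 + o.rotation (p.2 : Real.Angle) (y p.1)‖ < ‖z p.1‖}) ?_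
  simp only [Orientation.rotation_apply, Real.Angle.cos_coe, Real.Angle.sin_coe]
  exact measurableSet_lt (by fun_prop) (by fun_prop)

variable {ι : Type*}

open Classical in
/-- Rotate by the angle `θ` those steps of the walk with steps `f` whose index is in `I`. -/
noncomputable def rotateOn (I : Finset ι) (θ : ℝ) (f : ι → V) (i : ι) : V :=
  if i ∈ I then o.rotation (θ : Real.Angle) (f i) else f i

lemma sum_rotateOn_self (I : Finset ι) (θ : ℝ) (f : ι → V) :
    ∑ i ∈ I, rotateOn o I θ f i = o.rotation (θ : Real.Angle) (∑ i ∈ I, f i) := by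
  rw [map_sum]
  exact Finset.sum_congr rfl fun i hi ↦ if_pos hi

lemma sum_rotateOn_of_disjoint {I J : Finset ι} (hIJ : Disjoint I J) (θ : ℝ) (f : ι → V) :
    ∑ i ∈ J, rotateOn o I θ f i = ∑ i ∈ J, f i :=
  Finset.sum_congr rfl fun _ hi ↦ if_neg (Finset.disjoint_right.1 hIJ hi)

lemma sum_rotateOn_singleton [DecidableEq ι] {I : Finset ι} {j : ι} (hj : j ∈ I) (θ : ℝ)
    (f : ι → V) :
    ∑ i ∈ I, rotateOn o {j} θ f i
      = ∑ i ∈ I.erase j, f i + o.rotation (θ : Real.Angle) (f j) := by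
  rw [← Finset.sum_erase_add I _ hj, sum_rotateOn_of_disjoint o (by simp), rotateOn,
    if_pos (Finset.mem_singleton_self j)]

variable [MeasurableSpace V]

/-- Invariance of a measure on an oriented plane under all rotations about the origin. -/
def IsRotationInvariant (μ : Measure V) : Prop :=
  ∀ θ : Real.Angle, MeasurePreserving (o.rotation θ) μ μ

variable {o} in
lemma measurePreserving_rotateOn [Fintype ι] {ν : ι → Measure V}
    [∀ i, IsProbabilityMeasure (ν i)] (hν : ∀ i, IsRotationInvariant o (ν i)) (I : Finset ι)
    (θ : ℝ) : MeasurePreserving (rotateOn o I θ) (Measure.pi ν) (Measure.pi ν) := by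
  refine measurePreserving_pi ν ν (f := fun i x ↦ rotateOn o I θ (fun _ ↦ x) i) fun i ↦ ?_
  by_cases hi : i ∈ I
  · simpa only [rotateOn, if_pos hi] using hν i θ
  · simp only [rotateOn, if_neg hi]
    exact MeasurePreserving.id (ν i)

variable [BorelSpace V]

lemma measurable_rotateOn (I : Finset ι) :
    Measurable (Function.uncurry (rotateOn o I : ℝ → (ι → V) → ι → V)) := by
  refine measurable_pi_iff.2 fun i ↦ ?_
  by_cases hi : i ∈ I
  · simp only [Function.uncurry, rotateOn, if_pos hi, Orientation.rotation_apply,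
      Real.Angle.cos_coe, Real.Angle.sin_coe]
    fun_prop
  · simp only [Function.uncurry, rotateOn, if_neg hi]
    fun_prop

variable [Fintype ι] {ν : ι → Measure V} [∀ i, IsProbabilityMeasure (ν i)]

variable {o} in
lemma measure_norm_sum_add_sum_lt (hν : ∀ i, IsRotationInvariant o (ν i))
    {I J K : Finset ι} (hIJ : Disjoint I J) (hJK : Disjoint J K) :
    Measure.pi ν {f | ‖∑ i ∈ I, f i + ∑ i ∈ J, f i‖ < ‖∑ i ∈ K, f i‖}
      = ∫⁻ f, uniformAngle {θ : ℝ | ‖∑ i ∈ I, f i + o.rotation (θ : Real.Angle) (∑ i ∈ J, f i)‖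
          < ‖∑ i ∈ K, f i‖} ∂Measure.pi ν := by
  rw [measure_eq_lintegral_of_measurePreserving (κ := uniformAngle) (measurable_rotateOn o J)
    (measurePreserving_rotateOn hν J) (measurableSet_lt (by fun_prop) (by fun_prop))]
  simp only [Set.mem_ofPred_eq, sum_rotateOn_self, sum_rotateOn_of_disjoint o hIJ.symm,
    sum_rotateOn_of_disjoint o hJK]

section RotationInvariant

variable {o} (hν : ∀ i, IsRotationInvariant o (ν i)) (hν₀ : ∀ i, ∀ᵐ x ∂ν i, x ≠ 0)
include hν hν₀

lemma ae_sum_ne_zero {I : Finset ι} (hI : I.Nonempty) :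
    ∀ᵐ f ∂Measure.pi ν, ∑ i ∈ I, f i ≠ 0 := by
  classical
  obtain ⟨j, hj⟩ := hI
  refine ae_of_ae_ae_measurePreserving (κ := uniformAngle) (measurable_rotateOn o {j})
    (measurePreserving_rotateOn hν {j})
    (measurableSet_eq_fun (by fun_prop) measurable_const).compl ?_
  filter_upwards [(measurePreserving_eval ν j).quasiMeasurePreserving.ae (hν₀ j)] with f hf
  filter_upwards [ae_add_rotation_ne_zero o (∑ i ∈ I.erase j, f i) hf] with θ hθ
  rwa [sum_rotateOn_singleton o hj]

lemma ae_norm_sum_ne_norm_sum {I J : Finset ι} (hI : I.Nontrivial) (hIJ : Disjoint I J) :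
    ∀ᵐ f ∂Measure.pi ν, ‖∑ i ∈ I, f i‖ ≠ ‖∑ i ∈ J, f i‖ := by
  classical
  obtain ⟨j, hj⟩ := hI.nonempty
  refine ae_of_ae_ae_measurePreserving (κ := uniformAngle) (measurable_rotateOn o {j})
    (measurePreserving_rotateOn hν {j})
    (measurableSet_eq_fun (by fun_prop) (by fun_prop)).compl ?_
  filter_upwards [ae_sum_ne_zero hν hν₀ (hI.erase_nonempty (a := j)),
    (measurePreserving_eval ν j).quasiMeasurePreserving.ae (hν₀ j)] with f hrest hf
  filter_upwards [ae_norm_add_rotation_ne o hrest hf ‖∑ i ∈ J, f i‖] with θ hθ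
  rwa [sum_rotateOn_singleton o hj,
    sum_rotateOn_of_disjoint o (Finset.disjoint_of_subset_left (by simpa using hj) hIJ)]

lemma measure_norm_sum_add_sum_lt_add_add {I J K : Finset ι} (hI : I.Nonempty) (hJ : J.Nonempty)
    (hK : K.Nonempty) (hIJ : Disjoint I J) (hJK : Disjoint J K) (hKI : Disjoint K I) :
    Measure.pi ν {f | ‖∑ i ∈ I, f i + ∑ i ∈ J, f i‖ < ‖∑ i ∈ K, f i‖}
      + Measure.pi ν {f | ‖∑ i ∈ J, f i + ∑ i ∈ K, f i‖ < ‖∑ i ∈ I, f i‖}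
      + Measure.pi ν {f | ‖∑ i ∈ K, f i + ∑ i ∈ I, f i‖ < ‖∑ i ∈ J, f i‖} = 1 := by
  rw [measure_norm_sum_add_sum_lt hν hIJ hJK, measure_norm_sum_add_sum_lt hν hJK hKI,
    measure_norm_sum_add_sum_lt hν hKI hIJ,
    ← lintegral_add_right _ (measurable_uniformAngle_norm_add_rotation_lt o (by fun_prop)
      (by fun_prop) (by fun_prop)),
    ← lintegral_add_right _ (measurable_uniformAngle_norm_add_rotation_lt o (by fun_prop)
      (by fun_prop) (by fun_prop))]
  calc _ = ∫⁻ _, 1 ∂Measure.pi ν := by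
        refine lintegral_congr_ae ?_
        filter_upwards [ae_sum_ne_zero hν hν₀ hI, ae_sum_ne_zero hν hν₀ hJ,
          ae_sum_ne_zero hν hν₀ hK] with f hfI hfJ hfK
        exact uniformAngle_norm_add_rotation_lt_add_add o hfI hfJ hfK
    _ = 1 := by simp

variable [DecidableEq ι]

lemma longProb_add_longProb_compl (hι : 2 < Fintype.card ι) (I : Finset ι) :
    longProb ν I + longProb ν Iᶜ = 1 := by
  have hne : ∀ᵐ f ∂Measure.pi ν, ‖∑ i ∈ I, f i‖ ≠ ‖∑ i ∈ Iᶜ, f i‖ := by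
    have hcard : 1 < I.card ∨ 1 < Iᶜ.card := by
      have := I.card_add_card_compl
      omega
    rcases hcard with hI | hI
    · exact ae_norm_sum_ne_norm_sum hν hν₀ (Finset.one_lt_card_iff_nontrivial.1 hI)
        disjoint_compl_right
    · filter_upwards [ae_norm_sum_ne_norm_sum hν hν₀ (Finset.one_lt_card_iff_nontrivial.1 hI)
        disjoint_compl_left] with f hf using hf.symm
  have hcompl : longProb ν Iᶜ = Measure.pi ν {f | ‖∑ i ∈ Iᶜ, f i‖ < ‖∑ i ∈ I, f i‖}ᶜ := by
    rw [longProb, compl_compl]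
    refine measure_congr ?_
    filter_upwards [hne] with f hf
    exact propext ⟨fun h ↦ h.not_gt, fun h ↦ lt_of_le_of_ne (not_lt.1 h) hf⟩
  rw [hcompl, longProb, prob_add_prob_compl (measurableSet_lt (by fun_prop) (by fun_prop))]

lemma longProb_univ (hι : 2 < Fintype.card ι) : longProb ν Finset.univ = 1 := by
  simpa only [longProb_empty, zero_add, Finset.compl_empty]
    using longProb_add_longProb_compl hν hν₀ hι ∅

lemma longProb_add_add_longProb_compl_union {I J : Finset ι} (hI : I.Nonempty) (hJ : J.Nonempty)
    (hIJ : Disjoint I J) (hK : (I ∪ J)ᶜ.Nonempty) :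
    longProb ν I + longProb ν J + longProb ν (I ∪ J)ᶜ = 1 := by
  have hJK : Disjoint J (I ∪ J)ᶜ := disjoint_compl_right.mono_left Finset.subset_union_right
  have hKI : Disjoint (I ∪ J)ᶜ I := disjoint_compl_left.mono_right Finset.subset_union_left
  have hIc : Iᶜ = J ∪ (I ∪ J)ᶜ := by grind [Finset.disjoint_left, Finset.mem_compl]
  have hJc : Jᶜ = (I ∪ J)ᶜ ∪ I := by grind [Finset.disjoint_left, Finset.mem_compl]
  rw [longProb, longProb, longProb, compl_compl, hIc, hJc]
  simp only [Finset.sum_union hIJ, Finset.sum_union hJK, Finset.sum_union hKI]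
  exact measure_norm_sum_add_sum_lt_add_add hν hν₀ hJ hK hI hJK hKI hIJ

lemma longProb_union (hι : 2 < Fintype.card ι) {I J : Finset ι} (hIJ : Disjoint I J) :
    longProb ν (I ∪ J) = longProb ν I + longProb ν J := by
  rcases I.eq_empty_or_nonempty with rfl | hI
  · rw [Finset.empty_union, longProb_empty, zero_add]
  rcases J.eq_empty_or_nonempty with rfl | hJ
  · rw [Finset.union_empty, longProb_empty, add_zero]
  have hsum := longProb_add_longProb_compl hν hν₀ hι (I ∪ J)
  rcases (I ∪ J)ᶜ.eq_empty_or_nonempty with hK | hK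
  · have hunion : I ∪ J = Finset.univ := (Finset.compl_eq_empty_iff _).1 hK
    have hJc : Iᶜ = J := IsCompl.compl_eq ⟨hIJ, codisjoint_iff.2 hunion⟩
    rw [hunion, longProb_univ hν hν₀ hι, ← hJc, longProb_add_longProb_compl hν hν₀ hι]
  · have hfin : longProb ν (I ∪ J)ᶜ ≠ ∞ := measure_ne_top _ _
    exact (ENNReal.add_left_inj hfin).1
      (hsum.trans (longProb_add_add_longProb_compl_union hν hν₀ hI hJ hIJ hK).symm)

lemma longProb_eq_sum (hι : 2 < Fintype.card ι) (I : Finset ι) :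
    longProb ν I = ∑ i ∈ I, longProb ν {i} := by
  induction I using Finset.induction_on with
  | empty => rw [longProb_empty, Finset.sum_empty]
  | insert i I hi ih =>
    rw [Finset.insert_eq, longProb_union hν hν₀ hι (Finset.disjoint_singleton_left.2 hi), ih,
      ← Finset.insert_eq, Finset.sum_insert hi]

end RotationInvariant

variable {o} in
lemma longProb_const [DecidableEq ι] {μ : Measure V} [IsProbabilityMeasure μ]
    (hμ : IsRotationInvariant o μ) (hμ₀ : ∀ᵐ x ∂μ, x ≠ 0) (hι : 2 < Fintype.card ι) (I : Finset ι) :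
    longProb (fun _ ↦ μ) I = I.card / Fintype.card ι := by
  have hsum (J : Finset ι) := longProb_eq_sum (ν := fun _ ↦ μ) (fun _ ↦ hμ) (fun _ ↦ hμ₀) hι J
  obtain ⟨i₀⟩ : Nonempty ι := Fintype.card_pos_iff.1 (by omega)
  have hexch (i : ι) : longProb (fun _ ↦ μ) {i} = longProb (fun _ ↦ μ) {i₀} := by
    rw [← longProb_map_equiv μ (Equiv.swap i i₀) {i}, Finset.map_singleton,
      Equiv.coe_toEmbedding, Equiv.swap_apply_left]
  have hcard (J : Finset ι) :
      longProb (fun _ ↦ μ) J = J.card * longProb (fun _ ↦ μ) {i₀} := by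
    rw [hsum, Finset.sum_congr rfl fun i _ ↦ hexch i, Finset.sum_const, nsmul_eq_mul]
  have htotal : longProb (fun _ ↦ μ) {i₀} * Fintype.card ι = 1 := by
    rw [mul_comm, ← Finset.card_univ, ← hcard, longProb_univ (fun _ ↦ hμ) (fun _ ↦ hμ₀) hι]
  rw [hcard, ENNReal.eq_inv_of_mul_eq_one_left htotal, div_eq_mul_inv]

end Walk

end Rotation

section PlanarWalk

lemma stepVec_eq_repr (θ : ℝ) :
    stepVec θ = Complex.orthonormalBasisOneI.repr (Circle.exp θ) := by
  ext i
  fin_cases i <;> simp [stepVec, Circle.coe_exp, Complex.exp_ofReal_mul_I_re,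
    Complex.exp_ofReal_mul_I_im]

lemma continuous_stepVec : Continuous stepVec := by
  simp only [funext stepVec_eq_repr]
  fun_prop

lemma periodic_stepVec : Function.Periodic stepVec (2 * π) := fun θ ↦ by
  rw [stepVec_eq_repr, stepVec_eq_repr, Circle.periodic_exp]

lemma norm_stepVec (θ : ℝ) : ‖stepVec θ‖ = 1 := by
  rw [stepVec_eq_repr, LinearIsometryEquiv.norm_map, Circle.norm_coe]

/-- The counterclockwise orientation of the plane, transported from `ℂ`. -/
noncomputable def planeOrientation : Orientation ℝ (EuclideanSpace ℝ (Fin 2)) (Fin 2) :=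
  Orientation.map (Fin 2) Complex.orthonormalBasisOneI.repr.toLinearEquiv Complex.orientation

attribute [local instance] Complex.finrank_real_complex_fact

instance : Fact (Module.finrank ℝ (EuclideanSpace ℝ (Fin 2)) = 2) := ⟨finrank_euclideanSpace_fin⟩

lemma rotation_stepVec (φ : Real.Angle) (θ : ℝ) :
    planeOrientation.rotation φ (stepVec θ) = stepVec (φ.toReal + θ) := by
  have hφ : (φ.toCircle : ℂ) = Circle.exp φ.toReal := by
    rw [← Real.Angle.toCircle_coe, Real.Angle.coe_toReal]
  rw [planeOrientation, Orientation.rotation_map, stepVec_eq_repr, stepVec_eq_repr,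
    LinearIsometryEquiv.symm_apply_apply, Complex.rotation, hφ, Circle.exp_add, Circle.coe_mul]

instance : IsProbabilityMeasure uniformCircle :=
  Measure.isProbabilityMeasure_map (μ := uniformAngle) continuous_stepVec.aemeasurable

lemma isRotationInvariant_uniformCircle :
    IsRotationInvariant planeOrientation uniformCircle := fun φ ↦ by
  refine ⟨(planeOrientation.rotation φ).continuous.measurable, ?_⟩
  change (uniformAngle.map stepVec).map _ = uniformAngle.map stepVec
  rw [Measure.map_map (planeOrientation.rotation φ).continuous.measurable
    continuous_stepVec.measurable, ← map_uniformAngle_add continuous_stepVec.measurable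
    periodic_stepVec φ.toReal]
  exact congrArg (uniformAngle.map ·) (funext fun θ ↦ rotation_stepVec φ θ)

lemma ae_uniformCircle_ne_zero : ∀ᵐ u ∂uniformCircle, u ≠ 0 := by
  refine (ae_map_iff (μ := uniformAngle) continuous_stepVec.aemeasurable
    (measurableSet_singleton 0).compl).2 (ae_of_all _ fun θ ↦ ?_)
  exact norm_ne_zero_iff.1 (by simp [norm_stepVec])

/-- The law of a single step of the walk: a length with law `μ` times an independent uniform
direction. -/
noncomputable def stepLaw (μ : Measure ℝ) : Measure (EuclideanSpace ℝ (Fin 2)) :=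
  (μ.prod uniformCircle).map fun p ↦ p.1 • p.2

lemma ae_stepLaw_ne_zero {μ : Measure ℝ} (hμ : ∀ᵐ x ∂μ, x ≠ 0) : ∀ᵐ v ∂stepLaw μ, v ≠ 0 := by
  refine (ae_map_iff (by fun_prop) (measurableSet_singleton 0).compl).2 ?_
  filter_upwards [Measure.quasiMeasurePreserving_fst.ae hμ,
    Measure.quasiMeasurePreserving_snd.ae ae_uniformCircle_ne_zero] with p hlength hdir
  exact smul_ne_zero hlength hdir

variable (μ : Measure ℝ) [IsProbabilityMeasure μ]

instance : IsProbabilityMeasure (stepLaw μ) :=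
  Measure.isProbabilityMeasure_map (by fun_prop)

lemma isRotationInvariant_stepLaw : IsRotationInvariant planeOrientation (stepLaw μ) := fun φ ↦ by
  have hrot := (MeasurePreserving.id μ).prod (isRotationInvariant_uniformCircle φ)
  have hmeas := (planeOrientation.rotation φ).continuous.measurable
  refine ⟨hmeas, ?_⟩
  rw [stepLaw, Measure.map_map hmeas (by fun_prop)]
  conv_rhs => rw [← hrot.map_eq, Measure.map_map (by fun_prop) hrot.measurable]
  exact congrArg (Measure.map · _) (funext fun p ↦ map_smul (planeOrientation.rotation φ) p.1 p.2)

instance (n : ℕ) : IsProbabilityMeasure (walkDist μ n) :=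
  Measure.isProbabilityMeasure_map (by fun_prop)

lemma walkDist_eq_map_pi_stepLaw (n : ℕ) :
    walkDist μ n = (Measure.pi fun _ : Fin n ↦ stepLaw μ).map fun f ↦ ‖∑ i, f i‖ := by
  have harrow := measurePreserving_arrowProdEquivProdArrow ℝ (EuclideanSpace ℝ (Fin 2)) (Fin n)
    (fun _ ↦ μ) fun _ ↦ uniformCircle
  have hstep : MeasurePreserving (fun p : ℝ × EuclideanSpace ℝ (Fin 2) ↦ p.1 • p.2)
      (μ.prod uniformCircle) (stepLaw μ) :=
    ⟨by fun_prop, rfl⟩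
  have hsteps := measurePreserving_pi _ _ fun _ : Fin n ↦ hstep
  rw [walkDist, ← harrow.map_eq, Measure.map_map (by fun_prop) harrow.measurable,
    ← hsteps.map_eq, Measure.map_map (by fun_prop) hsteps.measurable]
  rfl

lemma prod_walkDist_lt_eq_longProb (m n : ℕ) :
    (walkDist μ m).prod (walkDist μ n) {p | p.2 < p.1}
      = longProb (fun _ : Fin m ⊕ Fin n ↦ stepLaw μ) (Finset.univ.map .inl) := by
  have hsplit := measurePreserving_sumPiEquivProdPi fun _ : Fin m ⊕ Fin n ↦ stepLaw μ
  have hcompl : (Finset.univ.map .inl : Finset (Fin m ⊕ Fin n))ᶜ = Finset.univ.map .inr := by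
    ext (i | j) <;> simp
  rw [walkDist_eq_map_pi_stepLaw, walkDist_eq_map_pi_stepLaw,
    Measure.map_prod_map _ _ (by fun_prop) (by fun_prop),
    Measure.map_apply (by fun_prop) (measurableSet_lt measurable_snd measurable_fst),
    ← hsplit.measure_preimage_equiv, longProb, hcompl]
  simp only [Finset.sum_map]
  rfl

end PlanarWalk

end

theorem stmt_0_general {Ω : Type*} [MeasurableSpace Ω] {P : Measure Ω}
    {μ : Measure ℝ} [IsProbabilityMeasure μ] (hμ : ∀ᵐ x ∂μ, x ≠ 0) {m n : ℕ} (hmn : 2 < m + n)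
    {Dm Dn : Ω → ℝ} (hDm : HasLaw Dm (walkDist μ m) P) (hDn : HasLaw Dn (walkDist μ n) P)
    (hind : IndepFun Dm Dn P) :
    P {ω | Dn ω < Dm ω} = (m : ℝ≥0∞) / (m + n) := by
  have := hDm.isProbabilityMeasure
  have hjoint : HasLaw (fun ω ↦ (Dm ω, Dn ω)) ((walkDist μ m).prod (walkDist μ n)) P :=
    hind.hasLaw_prod hDm hDn
  rw [hjoint.measure_eq (p := fun p ↦ p.2 < p.1) (measurableSet_lt measurable_snd measurable_fst),
    prod_walkDist_lt_eq_longProb,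
    longProb_const (isRotationInvariant_stepLaw μ) (ae_stepLaw_ne_zero hμ) (by simpa using hmn)]
  simp

theorem stmt_0 {Ω : Type*} [MeasurableSpace Ω] (P : Measure Ω) [IsProbabilityMeasure P]
    (X : Ω → ℝ) (hX : Measurable X) (hXpos : ∀ ω, 0 < X ω)
    (m n : ℕ) (hmn : 2 < m + n)
    (Dm Dn : Ω → ℝ) (hDm : Measurable Dm) (hDn : Measurable Dn)
    (hind : IndepFun Dm Dn P)
    (hDmlaw : Measure.map Dm P = walkDist (Measure.map X P) m)
    (hDnlaw : Measure.map Dn P = walkDist (Measure.map X P) n) :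
    P {ω | Dn ω < Dm ω} = (m : ℝ≥0∞) / (m + n) := by
  have := Measure.isProbabilityMeasure_map (μ := P) hX.aemeasurable
  have hlength : ∀ᵐ x ∂P.map X, x ≠ 0 :=
    (ae_map_iff hX.aemeasurable (measurableSet_singleton 0).compl).2
      (ae_of_all _ fun ω ↦ (hXpos ω).ne')
  exact stmt_0_general hlength hmn ⟨hDm.aemeasurable, hDmlaw⟩ ⟨hDn.aemeasurable, hDnlaw⟩ hind
end

section
/- (Rayleigh's theorem) Let n > 1 be an integer and consider a planar random walk of n unit steps with directions chosen independently and uniformly at random. The probability that the walk ends at distance strictly less than 1 from its starting point is 1/(n+1). Equivalently, Pr(n⊙1 < 1) = 1/(n+1), where n⊙1 = ‖U₁ + ⋯ + Uₙ‖ for independent random unit vectors U₁,…,Uₙ uniformly distributed on the unit circle of ℝ². -/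
open MeasureTheory ProbabilityTheory
open scoped ENNReal

/-!
Call a random vector of the plane isotropic if its law is invariant under rotations. If `X`, `Y`,
`Z` are independent, isotropic and almost surely nonzero, then, given the lengths `a`, `b`, `c`,
the event `‖X + Y‖ < ‖Z‖` has probability `γ / π`, where `γ` is the angle opposite `c` in the
triangle with sides `a`, `b`, `c`, suitably degenerate if there is no such triangle. Since the
angles of a triangle add up to `π`, the probabilities of `‖X + Y‖ < ‖Z‖`, `‖Y + Z‖ < ‖X‖` and
`‖Z + X‖ < ‖Y‖` add up to `1`.

Let `p i j` be the probability that an `i`-step walk ends farther from the origin than an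
independent `j`-step walk. Applying the above to walks of `j`, `1` and `k` steps, where
`j + 1 + k = n + 1`, and using `p k (j + 1) = 1 - p (j + 1) k`, one gets
`p (j + 1) k = p j (k + 1) + p 1 n`. Hence `p j (n + 1 - j) = j * p 1 n`, and
`p 1 n + p n 1 = 1` gives `p 1 n = 1 / (n + 1)`.
-/

namespace Rayleigh

section Triangle

/-- The angle opposite the side `c` in a triangle with side lengths `a`, `b`, `c`. When these
violate the triangle inequality, `Real.arccos` makes it `π` or `0`, the angle in the degenerate
triangle in which the longest side has been shortened. -/
noncomputable def triangleAngle (a b c : ℝ) : ℝ :=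
  Real.arccos ((a ^ 2 + b ^ 2 - c ^ 2) / (2 * a * b))

lemma triangleAngle_comm (a b c : ℝ) : triangleAngle a b c = triangleAngle b a c := by
  unfold triangleAngle
  ring_nf

lemma triangleAngle_nonneg (a b c : ℝ) : 0 ≤ triangleAngle a b c :=
  Real.arccos_nonneg _

@[fun_prop]
lemma measurable_triangleAngle {α : Type*} [MeasurableSpace α] {a b c : α → ℝ}
    (ha : Measurable a) (hb : Measurable b) (hc : Measurable c) :
    Measurable fun x => triangleAngle (a x) (b x) (c x) :=
  Real.measurable_arccos.comp (by fun_prop)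

lemma triangleAngle_eq_pi {a b c : ℝ} (ha : 0 < a) (hb : 0 < b) (h : a + b ≤ c) :
    triangleAngle a b c = Real.pi := by
  apply Real.arccos_of_le_neg_one
  rw [div_le_iff₀ (by positivity)]
  nlinarith

lemma triangleAngle_eq_zero {a b c : ℝ} (ha : 0 < a) (hb : 0 < b) (hc : 0 ≤ c) (h : b + c ≤ a) :
    triangleAngle a b c = 0 := by
  apply Real.arccos_of_one_le
  rw [le_div_iff₀ (by positivity)]
  nlinarith

lemma triangleAngle_norm {V : Type*} [NormedAddCommGroup V] [InnerProductSpace ℝ V] (x y : V) :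
    triangleAngle ‖x‖ ‖y‖ ‖x - y‖ = InnerProductGeometry.angle x y := by
  rw [triangleAngle, InnerProductGeometry.angle,
    real_inner_eq_norm_mul_self_add_norm_mul_self_sub_norm_sub_mul_self_div_two, div_div]
  ring_nf

lemma exists_norm_eq_norm_eq_norm_sub_eq {a b c : ℝ} (ha : 0 < a) (hb : 0 < b)
    (hab : a ≤ b + c) (hbc : b ≤ c + a) (hca : c ≤ a + b) :
    ∃ x y : ℂ, ‖x‖ = a ∧ ‖y‖ = b ∧ ‖x - y‖ = c := by
  set s := (a ^ 2 + b ^ 2 - c ^ 2) / (2 * a * b) with hs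
  have hcos : Real.cos (Real.arccos s) = s := by
    apply Real.cos_arccos
    · rw [hs, le_div_iff₀ (by positivity)]
      nlinarith
    · rw [hs, div_le_iff₀ (by positivity)]
      nlinarith
  have h_law : 2 * a * b * s = a ^ 2 + b ^ 2 - c ^ 2 := by
    rw [hs]
    field_simp
  refine ⟨a, b * Complex.exp (Real.arccos s * Complex.I), by simp [ha.le], by simp [hb.le], ?_⟩
  rw [← sq_eq_sq₀ (norm_nonneg _) (by linarith), Complex.sq_norm, Complex.normSq_apply]
  simp only [Complex.sub_re, Complex.sub_im, Complex.re_ofReal_mul, Complex.im_ofReal_mul,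
    Complex.ofReal_re, Complex.ofReal_im, Complex.exp_ofReal_mul_I_re,
    Complex.exp_ofReal_mul_I_im, hcos]
  have h_sq := Real.sin_sq_add_cos_sq (Real.arccos s)
  rw [hcos] at h_sq
  linear_combination b ^ 2 * h_sq - h_law

lemma triangleAngle_add_add_eq_pi {a b c : ℝ} (ha : 0 < a) (hb : 0 < b) (hc : 0 < c) :
    triangleAngle a b c + triangleAngle b c a + triangleAngle c a b = Real.pi := by
  rcases le_or_gt (a + b) c with hab | hab
  · rw [triangleAngle_eq_pi ha hb hab, triangleAngle_comm b c a,
      triangleAngle_eq_zero hc hb ha.le (by linarith),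
      triangleAngle_eq_zero hc ha hb.le hab]
    ring
  rcases le_or_gt (b + c) a with hbc | hbc
  · rw [triangleAngle_eq_pi hb hc hbc, triangleAngle_comm c a b,
      triangleAngle_eq_zero ha hc hb.le (by linarith), triangleAngle_eq_zero ha hb hc.le hbc]
    ring
  rcases le_or_gt (c + a) b with hca | hca
  · rw [triangleAngle_eq_pi hc ha hca, triangleAngle_comm a b c,
      triangleAngle_eq_zero hb ha hc.le (by linarith), triangleAngle_eq_zero hb hc ha.le hca]
    ring
  obtain ⟨x, y, hx, hy, hxy⟩ := exists_norm_eq_norm_eq_norm_sub_eq ha hb hbc.le hca.le hab.le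
  have hyx : ‖y - x‖ = c := by rw [norm_sub_rev, hxy]
  have h_sum := InnerProductGeometry.angle_add_angle_sub_add_angle_sub_eq_pi x
    (norm_pos_iff.mp (hy ▸ hb))
  simp only [← triangleAngle_norm, sub_sub_cancel, hx, hy, hxy, hyx] at h_sum
  rw [triangleAngle_comm c a b]
  linarith

lemma ofReal_triangleAngle_div_pi_add_add {a b c : ℝ} (ha : 0 < a) (hb : 0 < b) (hc : 0 < c) :
    ENNReal.ofReal (triangleAngle a b c / Real.pi) +
      ENNReal.ofReal (triangleAngle b c a / Real.pi) +
      ENNReal.ofReal (triangleAngle c a b / Real.pi) = 1 := by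
  have h_nonneg (x y z : ℝ) : 0 ≤ triangleAngle x y z / Real.pi :=
    div_nonneg (triangleAngle_nonneg x y z) Real.pi_pos.le
  rw [← ENNReal.ofReal_add (h_nonneg _ _ _) (h_nonneg _ _ _),
    ← ENNReal.ofReal_add (add_nonneg (h_nonneg _ _ _) (h_nonneg _ _ _)) (h_nonneg _ _ _),
    ← add_div, ← add_div, triangleAngle_add_add_eq_pi ha hb hc, div_self Real.pi_ne_zero,
    ENNReal.ofReal_one]

end Triangle

section UniformAngle

open Real (Angle)

instance : Fact (0 < 2 * Real.pi) := ⟨Real.two_pi_pos⟩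

instance : MeasurableSpace Angle := inferInstanceAs (MeasurableSpace (AddCircle (2 * Real.pi)))

instance : BorelSpace Angle := inferInstanceAs (BorelSpace (AddCircle (2 * Real.pi)))

instance : SecondCountableTopology Angle :=
  inferInstanceAs (SecondCountableTopology (AddCircle (2 * Real.pi)))

/-- The uniform probability measure on angles, realized as the normalized Haar measure of
the additive circle of length `2π`. -/
noncomputable def uniformAngle : Measure Angle :=
  AddCircle.haarAddCircle (T := 2 * Real.pi)

instance : IsProbabilityMeasure uniformAngle :=
  inferInstanceAs (IsProbabilityMeasure (AddCircle.haarAddCircle (T := 2 * Real.pi)))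

instance : uniformAngle.IsAddLeftInvariant :=
  inferInstanceAs (AddCircle.haarAddCircle (T := 2 * Real.pi)).IsAddLeftInvariant

lemma measurePreserving_angle_coe (t : ℝ) :
    MeasurePreserving ((↑) : ℝ → Angle)
      ((ENNReal.ofReal (2 * Real.pi))⁻¹ • volume.restrict (Set.Ioc t (t + 2 * Real.pi)))
      uniformAngle := by
  have h := (AddCircle.measurePreserving_mk (2 * Real.pi) t).smul_measure
    (ENNReal.ofReal (2 * Real.pi))⁻¹
  rwa [AddCircle.volume_eq_smul_haarAddCircle, smul_smul,
    ENNReal.inv_mul_cancel (by simp [Real.pi_pos]) ENNReal.ofReal_ne_top, one_smul] at h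

lemma lt_cos_iff_abs_lt_arccos {s θ : ℝ} (hθ : |θ| < Real.pi) :
    s < Real.cos θ ↔ |θ| < Real.arccos s := by
  have h_abs : Real.arccos (Real.cos θ) = |θ| := by
    rw [← Real.cos_abs, Real.arccos_cos (abs_nonneg θ) hθ.le]
  constructor
  · intro h
    rcases lt_or_ge s (-1) with hs | hs
    · rwa [Real.arccos_of_le_neg_one hs.le]
    · rw [← h_abs]
      exact Real.arccos_lt_arccos hs h (Real.cos_le_one θ)
  · contrapose!
    intro h
    rw [← h_abs]
    exact Real.arccos_le_arccos h

lemma uniformAngle_setOf_lt_cos (s : ℝ) :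
    uniformAngle {θ | s < θ.cos} = ENNReal.ofReal (Real.arccos s / Real.pi) := by
  have h_meas : MeasurableSet {θ : Angle | s < θ.cos} :=
    (isOpen_lt continuous_const Real.Angle.continuous_cos).measurableSet
  have h_interval : {θ : ℝ | s < Real.cos θ} ∩ Set.Ioo (-Real.pi) Real.pi =
      Set.Ioo (-Real.arccos s) (Real.arccos s) := by
    ext θ
    simp only [Set.mem_inter_iff, Set.mem_ofPred_eq, Set.mem_Ioo, ← abs_lt]
    exact ⟨fun h => (lt_cos_iff_abs_lt_arccos h.2).mp h.1, fun h =>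
      have hθ := h.trans_le (Real.arccos_le_pi s)
      ⟨(lt_cos_iff_abs_lt_arccos hθ).mpr h, hθ⟩⟩
  calc uniformAngle {θ | s < θ.cos}
      = (ENNReal.ofReal (2 * Real.pi))⁻¹ *
          volume ({θ : ℝ | s < Real.cos θ} ∩ Set.Ioo (-Real.pi) Real.pi) := by
        rw [← (measurePreserving_angle_coe (-Real.pi)).measure_preimage h_meas.nullMeasurableSet,
          show -Real.pi + 2 * Real.pi = Real.pi by ring, ← Measure.restrict_congr_set Ioo_ae_eq_Ioc,
          Measure.smul_apply, smul_eq_mul, Measure.restrict_apply' measurableSet_Ioo]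
        rfl
    _ = ENNReal.ofReal (Real.arccos s / Real.pi) := by
        rw [h_interval, Real.volume_Ioo, ← ENNReal.ofReal_inv_of_pos Real.two_pi_pos,
          ← ENNReal.ofReal_mul (by positivity)]
        congr 1
        field_simp
        ring

lemma uniformAngle_setOf_cos_eq (s : ℝ) : uniformAngle {θ | θ.cos = s} = 0 := by
  have h_meas : MeasurableSet {θ : Angle | θ.cos = s} :=
    (isClosed_eq Real.Angle.continuous_cos continuous_const).measurableSet
  have h_finite : ({θ : ℝ | Real.cos θ = s} ∩ Set.Ioc (-Real.pi) Real.pi).Finite := by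
    refine (Set.toFinite {Real.arccos s, -Real.arccos s}).subset fun θ hθ => ?_
    obtain ⟨rfl, hθ⟩ := hθ
    rw [← Real.cos_abs, Real.arccos_cos (abs_nonneg θ) (abs_le.mpr ⟨hθ.1.le, hθ.2⟩)]
    rcases abs_choice θ with h | h <;> simp [h]
  rw [← (measurePreserving_angle_coe (-Real.pi)).measure_preimage h_meas.nullMeasurableSet,
    show -Real.pi + 2 * Real.pi = Real.pi by ring, Measure.smul_apply,
    Measure.restrict_apply' measurableSet_Ioc]
  exact (congrArg _ (h_finite.measure_zero volume)).trans (smul_zero _)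

end UniformAngle

section Rotation

open Real (Angle)

attribute [local instance] FiniteDimensional.of_fact_finrank_eq_two

variable {V : Type*} [NormedAddCommGroup V] [InnerProductSpace ℝ V]
  [Fact (Module.finrank ℝ V = 2)] (o : Orientation ℝ V (Fin 2))

lemma continuous_rotation : Continuous fun p : Angle × V => o.rotation p.1 p.2 := by
  simp only [Orientation.rotation_apply]
  exact ((Real.Angle.continuous_cos.comp continuous_fst).smul continuous_snd).add
    ((Real.Angle.continuous_sin.comp continuous_fst).smul
      (o.rightAngleRotation.continuous.comp continuous_snd))

lemma continuous_rotation_apply (x : V) : Continuous fun θ : Angle => o.rotation θ x :=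
  (continuous_rotation o).comp (continuous_id.prodMk continuous_const)

lemma norm_add_rotation_sq {a b : V} (ha : a ≠ 0) (hb : b ≠ 0) (θ : Angle) :
    ‖a + o.rotation θ b‖ ^ 2 =
      ‖a‖ ^ 2 + ‖b‖ ^ 2 - 2 * ‖a‖ * ‖b‖ * (o.oangle a (-b) + θ).cos := by
  have h := norm_sub_sq_real a (o.rotation θ (-b))
  rw [o.inner_eq_norm_mul_norm_mul_cos_oangle, o.oangle_rotation_right ha (neg_ne_zero.mpr hb),
    LinearIsometryEquiv.norm_map, norm_neg, map_neg, sub_neg_eq_add] at h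
  rw [h]
  ring

lemma uniformAngle_setOf_norm_add_rotation_lt {a b : V} (ha : a ≠ 0) (hb : b ≠ 0) {r : ℝ}
    (hr : 0 ≤ r) :
    uniformAngle {θ | ‖a + o.rotation θ b‖ < r} =
      ENNReal.ofReal (triangleAngle ‖a‖ ‖b‖ r / Real.pi) := by
  rw [triangleAngle, ← uniformAngle_setOf_lt_cos,
    ← measure_preimage_add uniformAngle (o.oangle a (-b)) {θ | _ < θ.cos}]
  congr 1
  ext θ
  rw [Set.mem_ofPred_eq, Set.mem_preimage, Set.mem_ofPred_eq, ← sq_lt_sq₀ (norm_nonneg _) hr,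
    norm_add_rotation_sq o ha hb, div_lt_iff₀ (by positivity)]
  constructor <;> intro h <;> linarith

lemma uniformAngle_setOf_norm_add_rotation_eq {a b : V} (ha : a ≠ 0) (hb : b ≠ 0) (r : ℝ) :
    uniformAngle {θ | ‖a + o.rotation θ b‖ = r} = 0 := by
  rw [← nonpos_iff_eq_zero,
    ← uniformAngle_setOf_cos_eq ((‖a‖ ^ 2 + ‖b‖ ^ 2 - r ^ 2) / (2 * ‖a‖ * ‖b‖)),
    ← measure_preimage_add uniformAngle (o.oangle a (-b)) {θ | θ.cos = _}]
  refine measure_mono fun θ hθ => ?_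
  have h := norm_add_rotation_sq o ha hb θ
  rw [hθ] at h
  rw [Set.mem_preimage, Set.mem_ofPred_eq, eq_div_iff (by positivity)]
  linarith

variable [MeasurableSpace V] [BorelSpace V]

/-- Invariance of a measure on an oriented plane under all rotations about the origin: the law of
a random vector with uniform direction independent of its length has this property. -/
def IsRotationInvariant (μ : Measure V) : Prop :=
  ∀ θ : Angle, MeasurePreserving (o.rotation θ) μ μ

variable {o}

lemma isRotationInvariant_map_rotation (x : V) :
    IsRotationInvariant o (uniformAngle.map fun θ => o.rotation θ x) := by
  intro φ
  have h_orbit := (continuous_rotation_apply o x).measurable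
  have h_rot := (o.rotation φ).continuous.measurable
  refine ⟨h_rot, ?_⟩
  rw [Measure.map_map h_rot h_orbit]
  conv_rhs => rw [← map_add_left_eq_self uniformAngle φ,
    Measure.map_map h_orbit (measurable_const_add φ)]
  congr 1
  ext θ
  exact o.rotation_rotation φ θ x

lemma isRotationInvariant_dirac_zero : IsRotationInvariant o (Measure.dirac (0 : V)) := by
  intro θ
  have h_rot := (o.rotation θ).continuous.measurable
  exact ⟨h_rot, by rw [Measure.map_dirac' h_rot, map_zero]⟩

lemma IsRotationInvariant.conv {μ ν : Measure V} [SFinite μ] [SFinite ν]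
    (hμ : IsRotationInvariant o μ) (hν : IsRotationInvariant o ν) :
    IsRotationInvariant o (μ ∗ ν) := by
  intro θ
  refine ⟨(hμ θ).measurable, ?_⟩
  have h := Measure.map_conv_addMonoidHom (μ := μ) (ν := ν)
    (AddMonoidHomClass.toAddMonoidHom (o.rotation θ))
  rw [AddMonoidHom.coe_coe] at h
  rw [h (hμ θ).measurable, (hμ θ).map_eq, (hν θ).map_eq]

lemma IsRotationInvariant.measure_prod_eq_lintegral {α : Type*} [MeasurableSpace α]
    {κ : Measure α} {μ : Measure V} [SFinite κ] [SFinite μ] (hμ : IsRotationInvariant o μ)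
    {s : Set (α × V)} (hs : MeasurableSet s) :
    κ.prod μ s = ∫⁻ p, uniformAngle {θ | (p.1, o.rotation θ p.2) ∈ s} ∂κ.prod μ := by
  have h_pair : Measurable fun q : Angle × α × V => (q.1, q.2.2) := by fun_prop
  have h_rot := (continuous_rotation o).measurable.comp h_pair
  have h_act : Measurable fun q : Angle × α × V => (q.2.1, o.rotation q.1 q.2.2) :=
    measurable_snd.fst.prodMk h_rot
  calc κ.prod μ s
      = ∫⁻ θ, κ.prod μ {p | (p.1, o.rotation θ p.2) ∈ s} ∂uniformAngle := by
        have h_const (θ : Angle) : κ.prod μ {p | (p.1, o.rotation θ p.2) ∈ s} = κ.prod μ s :=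
          ((MeasurePreserving.id κ).prod (hμ θ)).measure_preimage hs.nullMeasurableSet
        simp only [h_const, lintegral_const, measure_univ, mul_one]
    _ = uniformAngle.prod (κ.prod μ) {q | (q.2.1, o.rotation q.1 q.2.2) ∈ s} :=
        (Measure.prod_apply (h_act hs)).symm
    _ = ∫⁻ p, uniformAngle {θ | (p.1, o.rotation θ p.2) ∈ s} ∂κ.prod μ :=
        Measure.prod_apply_symm (h_act hs)

lemma IsRotationInvariant.conv_setOf_norm_eq {μ ν : Measure V} [SFinite μ] [SFinite ν]
    (hν : IsRotationInvariant o ν) (hμ₀ : ∀ᵐ x ∂μ, x ≠ 0) (hν₀ : ∀ᵐ x ∂ν, x ≠ 0) (r : ℝ) :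
    (μ ∗ ν) {x | ‖x‖ = r} = 0 := by
  have h_sphere : MeasurableSet {x : V | ‖x‖ = r} :=
    measurableSet_eq_fun measurable_norm measurable_const
  rw [Measure.conv, Measure.map_apply measurable_add h_sphere,
    hν.measure_prod_eq_lintegral (measurable_add h_sphere)]
  refine lintegral_eq_zero_of_ae_eq_zero ?_
  filter_upwards [Measure.quasiMeasurePreserving_fst.ae hμ₀,
    Measure.quasiMeasurePreserving_snd.ae hν₀] with p hp₁ hp₂
  exact uniformAngle_setOf_norm_add_rotation_eq o hp₁ hp₂ r

lemma IsRotationInvariant.conv_ae_ne_zero {μ ν : Measure V} [SFinite μ] [SFinite ν]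
    (hν : IsRotationInvariant o ν) (hμ₀ : ∀ᵐ x ∂μ, x ≠ 0) (hν₀ : ∀ᵐ x ∂ν, x ≠ 0) :
    ∀ᵐ x ∂(μ ∗ ν), x ≠ 0 := by
  simpa [ae_iff] using hν.conv_setOf_norm_eq hμ₀ hν₀ 0

end Rotation

section NormComparison

lemma measure_prod_setOf_lt_norm_of_ae_norm_eq {V Ω : Type*} [NormedAddCommGroup V]
    [MeasurableSpace V] [MeasurableSpace Ω] {μ : Measure V} [IsProbabilityMeasure μ]
    {P : Measure Ω} [SFinite P] {f : Ω → ℝ} (hf : Measurable f) {r : ℝ} (hμ : ∀ᵐ x ∂μ, ‖x‖ = r) :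
    μ.prod P {p | f p.2 < ‖p.1‖} = P {ω | f ω < r} := by
  have h_ae : {p : V × Ω | f p.2 < ‖p.1‖} =ᵐ[μ.prod P] Prod.snd ⁻¹' {ω | f ω < r} := by
    filter_upwards [Measure.quasiMeasurePreserving_fst.ae hμ] with p hp
    exact congrArg (f p.2 < ·) hp
  rw [measure_congr h_ae]
  exact measurePreserving_snd.measure_preimage
    (measurableSet_lt hf measurable_const).nullMeasurableSet

variable {V : Type*} [NormedAddCommGroup V] [MeasurableSpace V]

/-- The probability that `‖Y‖ < ‖X‖` for independent `X` and `Y` with laws `μ` and `ν`. -/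
noncomputable def probNormLT (μ ν : Measure V) : ℝ≥0∞ :=
  μ.prod ν {p | ‖p.2‖ < ‖p.1‖}

lemma measurableSet_norm_lt_norm (V : Type*) [NormedAddCommGroup V] [MeasurableSpace V]
    [OpensMeasurableSpace V] : MeasurableSet {p : V × V | ‖p.2‖ < ‖p.1‖} :=
  measurableSet_lt (measurable_norm.comp measurable_snd) (measurable_norm.comp measurable_fst)

lemma probNormLT_add_probNormLT_swap [OpensMeasurableSpace V] {μ ν : Measure V}
    [IsProbabilityMeasure μ] [IsProbabilityMeasure ν] (hν : ∀ r, ν {y | ‖y‖ = r} = 0) :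
    probNormLT μ ν + probNormLT ν μ = 1 := by
  have h_tie : μ.prod ν {p | ‖p.2‖ = ‖p.1‖} = 0 :=
    Measure.measure_prod_null_of_ae_null
      (measurableSet_eq_fun (measurable_norm.comp measurable_snd)
        (measurable_norm.comp measurable_fst)) (.of_forall fun x => hν ‖x‖)
  have h_swap : probNormLT ν μ = μ.prod ν {p | ‖p.2‖ < ‖p.1‖}ᶜ := by
    rw [probNormLT, ← Measure.measurePreserving_swap.measure_preimage
      (measurableSet_norm_lt_norm V).nullMeasurableSet]
    refine measure_congr ?_
    filter_upwards [measure_eq_zero_iff_ae_notMem.mp h_tie] with p hp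
    exact propext ⟨fun h : ‖p.1‖ < ‖p.2‖ => h.not_gt,
      fun h : ¬‖p.2‖ < ‖p.1‖ => lt_of_le_of_ne (not_lt.mp h) (Ne.symm hp)⟩
  rw [h_swap]
  exact prob_add_prob_compl (measurableSet_norm_lt_norm V)

attribute [local instance] FiniteDimensional.of_fact_finrank_eq_two

variable [BorelSpace V] [InnerProductSpace ℝ V] [Fact (Module.finrank ℝ V = 2)]
  {o : Orientation ℝ V (Fin 2)}

lemma IsRotationInvariant.probNormLT_conv {κ μ ν : Measure V} [SFinite κ] [SFinite μ] [SFinite ν]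
    (hν : IsRotationInvariant o ν) (hμ₀ : ∀ᵐ x ∂μ, x ≠ 0) (hν₀ : ∀ᵐ x ∂ν, x ≠ 0) :
    probNormLT κ (μ ∗ ν) = ∫⁻ q, ENNReal.ofReal (triangleAngle ‖q.1.2‖ ‖q.2‖ ‖q.1.1‖ / Real.pi)
      ∂(κ.prod μ).prod ν := by
  have h_add : Measurable fun q : (V × V) × V => (q.1.1, q.1.2 + q.2) := by fun_prop
  have h_law : κ.prod (μ ∗ ν) =
      ((κ.prod μ).prod ν).map fun q => (q.1.1, q.1.2 + q.2) := by
    have h := Measure.map_prod_map κ (μ.prod ν) measurable_id measurable_add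
    rw [Measure.map_id, ← Measure.prodAssoc_prod, Measure.map_map (by fun_prop) (by fun_prop)] at h
    exact h
  rw [probNormLT, h_law, Measure.map_apply h_add (measurableSet_norm_lt_norm V),
    hν.measure_prod_eq_lintegral (h_add (measurableSet_norm_lt_norm V))]
  refine lintegral_congr_ae ?_
  filter_upwards [Measure.quasiMeasurePreserving_fst.ae
    (Measure.quasiMeasurePreserving_snd.ae hμ₀),
    Measure.quasiMeasurePreserving_snd.ae hν₀] with q hq₁ hq₂
  have h_angle := uniformAngle_setOf_norm_add_rotation_lt o hq₁ hq₂ (norm_nonneg q.1.1)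
  exact h_angle

lemma lintegral_prod_prod_rotate {α β γ : Type*} [MeasurableSpace α] [MeasurableSpace β]
    [MeasurableSpace γ] {κ : Measure α} {μ : Measure β} {ν : Measure γ} [SFinite κ] [SFinite μ]
    [SFinite ν] {f : (β × γ) × α → ℝ≥0∞} (hf : Measurable f) :
    ∫⁻ q, f q ∂(μ.prod ν).prod κ = ∫⁻ q, f ((q.1.2, q.2), q.1.1) ∂(κ.prod μ).prod ν :=
  ((Measure.measurePreserving_swap.comp (measurePreserving_prodAssoc κ μ ν)).lintegral_comp hf).symm

lemma probNormLT_conv_cyclic_sum {κ μ ν : Measure V} [IsProbabilityMeasure κ]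
    [IsProbabilityMeasure μ] [IsProbabilityMeasure ν] (hκ : IsRotationInvariant o κ)
    (hμ : IsRotationInvariant o μ) (hν : IsRotationInvariant o ν) (hκ₀ : ∀ᵐ x ∂κ, x ≠ 0)
    (hμ₀ : ∀ᵐ x ∂μ, x ≠ 0) (hν₀ : ∀ᵐ x ∂ν, x ≠ 0) :
    probNormLT κ (μ ∗ ν) + probNormLT μ (ν ∗ κ) + probNormLT ν (κ ∗ μ) = 1 := by
  have h_meas : Measurable fun q : (V × V) × V =>
      ENNReal.ofReal (triangleAngle ‖q.1.2‖ ‖q.2‖ ‖q.1.1‖ / Real.pi) := by fun_prop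
  have h_meas' : Measurable fun q : (V × V) × V =>
      ENNReal.ofReal (triangleAngle ‖q.2‖ ‖q.1.1‖ ‖q.1.2‖ / Real.pi) := by fun_prop
  have h_second : probNormLT μ (ν ∗ κ) = ∫⁻ q,
      ENNReal.ofReal (triangleAngle ‖q.2‖ ‖q.1.1‖ ‖q.1.2‖ / Real.pi) ∂(κ.prod μ).prod ν :=
    (hκ.probNormLT_conv hν₀ hκ₀).trans (lintegral_prod_prod_rotate h_meas)
  have h_third : probNormLT ν (κ ∗ μ) = ∫⁻ q,
      ENNReal.ofReal (triangleAngle ‖q.1.1‖ ‖q.1.2‖ ‖q.2‖ / Real.pi) ∂(κ.prod μ).prod ν :=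
    (hμ.probNormLT_conv hκ₀ hμ₀).trans ((lintegral_prod_prod_rotate h_meas).trans
      (lintegral_prod_prod_rotate h_meas'))
  have h_angles : ∀ᵐ q ∂(κ.prod μ).prod ν,
      ENNReal.ofReal (triangleAngle ‖q.1.2‖ ‖q.2‖ ‖q.1.1‖ / Real.pi) +
        ENNReal.ofReal (triangleAngle ‖q.2‖ ‖q.1.1‖ ‖q.1.2‖ / Real.pi) +
        ENNReal.ofReal (triangleAngle ‖q.1.1‖ ‖q.1.2‖ ‖q.2‖ / Real.pi) = 1 := by
    filter_upwards [Measure.quasiMeasurePreserving_fst.ae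
      (Measure.quasiMeasurePreserving_fst.ae hκ₀), Measure.quasiMeasurePreserving_fst.ae
      (Measure.quasiMeasurePreserving_snd.ae hμ₀), Measure.quasiMeasurePreserving_snd.ae hν₀]
      with q hq₁ hq₂ hq₃
    exact ofReal_triangleAngle_div_pi_add_add (norm_pos_iff.mpr hq₂) (norm_pos_iff.mpr hq₃)
      (norm_pos_iff.mpr hq₁)
  rw [hν.probNormLT_conv hμ₀ hν₀, h_second, h_third, ← lintegral_add_left h_meas,
    ← lintegral_add_left (h_meas.fun_add h_meas'), lintegral_congr_ae h_angles,
    lintegral_one, measure_univ]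

end NormComparison

section Walk

section AddMonoid

variable {M : Type*} [AddMonoid M] [MeasurableSpace M]

/-- The law of the `n`-th position of a random walk starting at `0` whose independent steps have
law `μ`. -/
noncomputable def walkLaw (μ : Measure M) : ℕ → Measure M
  | 0 => Measure.dirac 0
  | n + 1 => μ ∗ walkLaw μ n

variable [MeasurableAdd₂ M] (μ : Measure M) [IsProbabilityMeasure μ]

instance (n : ℕ) : IsProbabilityMeasure (walkLaw μ n) := by
  induction n with
  | zero => exact Measure.dirac.isProbabilityMeasure
  | succ n ih => exact Measure.probabilitymeasure_of_probabilitymeasures_conv μ (walkLaw μ n)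

lemma walkLaw_one : walkLaw μ 1 = μ :=
  Measure.conv_dirac_zero μ

lemma walkLaw_add (m n : ℕ) : walkLaw μ (m + n) = walkLaw μ m ∗ walkLaw μ n := by
  induction m with
  | zero => rw [Nat.zero_add, walkLaw, Measure.dirac_zero_conv]
  | succ m ih => rw [Nat.succ_add, walkLaw, ih, walkLaw, Measure.conv_assoc]

end AddMonoid

lemma map_sum_pi_eq_walkLaw {M : Type*} [AddCommMonoid M] [MeasurableSpace M] [MeasurableAdd₂ M]
    (μ : Measure M) [IsProbabilityMeasure μ] (n : ℕ) :
    (Measure.pi fun _ : Fin n => μ).map (fun u => ∑ i, u i) = walkLaw μ n := by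
  induction n with
  | zero => simp [walkLaw, Measure.map_const]
  | succ n ih =>
    have h_split := measurePreserving_piFinSuccAbove (fun _ : Fin (n + 1) => μ) 0
    have h_prod := Measure.map_prod_map μ (Measure.pi fun _ : Fin n => μ) measurable_id
      (show Measurable fun u : Fin n → M => ∑ i, u i by fun_prop)
    rw [Measure.map_id, ih] at h_prod
    rw [walkLaw, Measure.conv, h_prod, Measure.map_map (by fun_prop) (by fun_prop),
      ← h_split.map_eq, Measure.map_map (by fun_prop) h_split.measurable]
    congr 1
    ext u
    simp [Fin.sum_univ_succ, Fin.tail]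

lemma measure_prod_pi_setOf_norm_sum_lt {V : Type*} [NormedAddCommGroup V] [MeasurableSpace V]
    [OpensMeasurableSpace V] [MeasurableAdd₂ V] (μ : Measure V) [IsProbabilityMeasure μ] (n : ℕ) :
    μ.prod (Measure.pi fun _ : Fin n => μ) {p | ‖∑ i, p.2 i‖ < ‖p.1‖} =
      probNormLT μ (walkLaw μ n) := by
  have h_sum : Measurable fun u : Fin n → V => ∑ i, u i := by fun_prop
  have h_map : MeasurePreserving _ (Measure.pi fun _ => μ) (walkLaw μ n) :=
    ⟨h_sum, map_sum_pi_eq_walkLaw μ n⟩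
  exact ((MeasurePreserving.id μ).prod h_map).measure_preimage
    (measurableSet_norm_lt_norm V).nullMeasurableSet

attribute [local instance] FiniteDimensional.of_fact_finrank_eq_two

variable {V : Type*} [NormedAddCommGroup V] [InnerProductSpace ℝ V]
  [Fact (Module.finrank ℝ V = 2)] [MeasurableSpace V] [BorelSpace V]
  {o : Orientation ℝ V (Fin 2)} {μ : Measure V} [IsProbabilityMeasure μ]

lemma IsRotationInvariant.walkLaw (hμ : IsRotationInvariant o μ) (n : ℕ) :
    IsRotationInvariant o (walkLaw μ n) := by
  induction n with
  | zero => exact isRotationInvariant_dirac_zero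
  | succ n ih => exact hμ.conv ih

lemma walkLaw_ae_ne_zero (hμ : IsRotationInvariant o μ) (hμ₀ : ∀ᵐ x ∂μ, x ≠ 0) {n : ℕ}
    (hn : 0 < n) : ∀ᵐ x ∂walkLaw μ n, x ≠ 0 := by
  induction n, hn using Nat.le_induction with
  | base => exact (walkLaw_one μ).symm ▸ hμ₀
  | succ n _ ih => exact (hμ.walkLaw n).conv_ae_ne_zero hμ₀ ih

lemma walkLaw_setOf_norm_eq (hμ : IsRotationInvariant o μ) (hμ₀ : ∀ᵐ x ∂μ, x ≠ 0) {n : ℕ}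
    (hn : 1 < n) (r : ℝ) : walkLaw μ n {x | ‖x‖ = r} = 0 := by
  obtain ⟨n, rfl⟩ := Nat.exists_eq_add_of_lt hn
  rw [add_assoc, walkLaw_add, walkLaw_one]
  exact (hμ.walkLaw (n + 1)).conv_setOf_norm_eq hμ₀ (walkLaw_ae_ne_zero hμ hμ₀ n.succ_pos) r

lemma probNormLT_walkLaw_add_swap (hμ : IsRotationInvariant o μ) (hμ₀ : ∀ᵐ x ∂μ, x ≠ 0)
    {i j : ℕ} (hij : 2 < i + j) :
    probNormLT (walkLaw μ i) (walkLaw μ j) + probNormLT (walkLaw μ j) (walkLaw μ i) = 1 := by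
  rcases lt_or_ge 1 j with hj | hj
  · exact probNormLT_add_probNormLT_swap (walkLaw_setOf_norm_eq hμ hμ₀ hj)
  · rw [add_comm]
    exact probNormLT_add_probNormLT_swap (walkLaw_setOf_norm_eq hμ hμ₀ (by lia))

lemma probNormLT_walkLaw_cyclic_sum (hμ : IsRotationInvariant o μ) (hμ₀ : ∀ᵐ x ∂μ, x ≠ 0)
    {i j k : ℕ} (hi : 0 < i) (hj : 0 < j) (hk : 0 < k) :
    probNormLT (walkLaw μ i) (walkLaw μ (j + k)) + probNormLT (walkLaw μ j) (walkLaw μ (k + i)) +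
      probNormLT (walkLaw μ k) (walkLaw μ (i + j)) = 1 := by
  simp only [walkLaw_add]
  exact probNormLT_conv_cyclic_sum (hμ.walkLaw i) (hμ.walkLaw j) (hμ.walkLaw k)
    (walkLaw_ae_ne_zero hμ hμ₀ hi) (walkLaw_ae_ne_zero hμ hμ₀ hj) (walkLaw_ae_ne_zero hμ hμ₀ hk)

end Walk

lemma eq_one_div_of_cyclic_sum_eq_one {p : ℕ → ℕ → ℝ≥0∞} {n : ℕ} (hn : 0 < n)
    (h_swap : ∀ i j, 0 < i → 0 < j → i + j = n + 1 → p i j + p j i = 1)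
    (h_cyclic : ∀ i j k, 0 < i → 0 < j → 0 < k → i + j + k = n + 1 →
      p i (j + k) + p j (k + i) + p k (i + j) = 1) :
    p 1 n = 1 / (n + 1) := by
  have h_step (j k : ℕ) (hj : 0 < j) (hk : 0 < k) (hjk : j + k = n) :
      p (j + 1) k = p j (k + 1) + p 1 n := by
    have h := h_swap (j + 1) k j.succ_pos hk (by lia)
    have h_ne_top : p k (j + 1) ≠ ∞ :=
      ne_top_of_le_ne_top ENNReal.one_ne_top (h ▸ le_add_self)
    rw [← h_cyclic j 1 k hj one_pos hk (by lia), ENNReal.add_left_inj h_ne_top, add_comm 1 k,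
      add_comm k j, hjk] at h
    exact h
  have h_linear (j k : ℕ) (hj : 0 < j) (hk : 0 < k) (hjk : j + k = n + 1) :
      p j k = j * p 1 n := by
    induction j, hj using Nat.le_induction generalizing k with
    | base => rw [show k = n by lia, Nat.cast_one, one_mul]
    | succ j hj ih =>
      rw [h_step j k hj hk (by lia), ih (k + 1) k.succ_pos (by lia), Nat.cast_succ, add_one_mul]
  have h := h_swap 1 n one_pos hn (add_comm 1 n)
  rw [h_linear n 1 hn one_pos rfl, add_comm, ← add_one_mul] at h
  rw [one_div]
  exact ENNReal.eq_inv_of_mul_eq_one_left ((mul_comm _ _).trans h)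

section UniformCircle

attribute [local instance] Complex.finrank_real_complex_fact

/-- The orientation of the Euclidean plane carried over from `ℂ`: rotations by positive angles are
counterclockwise. -/
noncomputable def planeOrientation : Orientation ℝ (EuclideanSpace ℝ (Fin 2)) (Fin 2) :=
  Orientation.map (Fin 2) Complex.orthonormalBasisOneI.repr.toLinearEquiv Complex.orientation

instance : Fact (Module.finrank ℝ (EuclideanSpace ℝ (Fin 2)) = 2) := ⟨finrank_euclideanSpace_fin⟩

lemma stepVec_eq_rotation (t : ℝ) : stepVec t = planeOrientation.rotation t (stepVec 0) := by
  have h_repr (s : ℝ) :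
      stepVec s = Complex.orthonormalBasisOneI.repr (Complex.exp (s * Complex.I)) := by
    ext i
    fin_cases i <;> simp [stepVec, Complex.exp_ofReal_mul_I_re, Complex.exp_ofReal_mul_I_im]
  rw [planeOrientation, Orientation.rotation_map, h_repr, h_repr,
    LinearIsometryEquiv.symm_apply_apply, Complex.rotation, Real.Angle.toCircle_coe,
    Circle.coe_exp, Complex.ofReal_zero, zero_mul, Complex.exp_zero, mul_one]

lemma norm_stepVec (t : ℝ) : ‖stepVec t‖ = 1 := by
  simp [stepVec, EuclideanSpace.norm_eq]

lemma uniformCircle_eq_map_uniformAngle :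
    uniformCircle = uniformAngle.map fun θ => planeOrientation.rotation θ (stepVec 0) := by
  have h_coe := measurePreserving_angle_coe 0
  rw [zero_add] at h_coe
  have h_orbit := (continuous_rotation_apply planeOrientation (stepVec 0)).measurable
  rw [← h_coe.map_eq, Measure.map_map h_orbit h_coe.measurable, uniformCircle]
  congr 1
  exact funext stepVec_eq_rotation

instance : IsProbabilityMeasure uniformCircle := by
  rw [uniformCircle_eq_map_uniformAngle]
  exact Measure.isProbabilityMeasure_map
    (continuous_rotation_apply planeOrientation (stepVec 0)).aemeasurable

lemma isRotationInvariant_uniformCircle : IsRotationInvariant planeOrientation uniformCircle := by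
  rw [uniformCircle_eq_map_uniformAngle]
  exact isRotationInvariant_map_rotation (stepVec 0)

lemma uniformCircle_ae_norm_eq_one : ∀ᵐ x ∂uniformCircle, ‖x‖ = 1 := by
  rw [uniformCircle_eq_map_uniformAngle, ae_map_iff
    (continuous_rotation_apply planeOrientation (stepVec 0)).aemeasurable
    (measurableSet_eq_fun measurable_norm measurable_const)]
  exact .of_forall fun θ => by rw [LinearIsometryEquiv.norm_map, norm_stepVec]

lemma uniformCircle_ae_ne_zero : ∀ᵐ x ∂uniformCircle, x ≠ 0 :=
  uniformCircle_ae_norm_eq_one.mono fun _ hx => norm_ne_zero_iff.mp (hx ▸ one_ne_zero)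

end UniformCircle

end Rayleigh

theorem stmt_1_general {V : Type*} [NormedAddCommGroup V] [InnerProductSpace ℝ V]
    [Fact (Module.finrank ℝ V = 2)] [MeasurableSpace V] [BorelSpace V]
    {o : Orientation ℝ V (Fin 2)} {μ : Measure V} [IsProbabilityMeasure μ]
    (hμ : Rayleigh.IsRotationInvariant o μ) (hμ₀ : ∀ᵐ x ∂μ, x ≠ 0) {n : ℕ} (hn : 1 < n) :
    μ.prod (Measure.pi fun _ : Fin n => μ) {p | ‖∑ i, p.2 i‖ < ‖p.1‖} = 1 / (n + 1) := by
  have := FiniteDimensional.of_fact_finrank_eq_two (K := ℝ) (V := V)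
  have h_walk := Rayleigh.eq_one_div_of_cyclic_sum_eq_one
    (p := fun i j => Rayleigh.probNormLT (Rayleigh.walkLaw μ i) (Rayleigh.walkLaw μ j))
    (zero_lt_one.trans hn)
    (fun i j _ _ hij => Rayleigh.probNormLT_walkLaw_add_swap hμ hμ₀ (by lia))
    (fun i j k hi hj hk _ => Rayleigh.probNormLT_walkLaw_cyclic_sum hμ hμ₀ hi hj hk)
  rwa [Rayleigh.walkLaw_one, ← Rayleigh.measure_prod_pi_setOf_norm_sum_lt] at h_walk

theorem stmt_1 (n : ℕ) (hn : 1 < n) :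
    (Measure.pi fun _ : Fin n => uniformCircle) {u | ‖∑ i, u i‖ < 1} =
      1 / (n + 1) :=
  (Rayleigh.measure_prod_setOf_lt_norm_of_ae_norm_eq (by fun_prop)
    Rayleigh.uniformCircle_ae_norm_eq_one).symm.trans
    (stmt_1_general Rayleigh.isRotationInvariant_uniformCircle
      Rayleigh.uniformCircle_ae_ne_zero hn)
end
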